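/- Let f : ℝ^d → ℝ be a real analytic function which is not identically zero, and let V = {x ∈ ℝ^d : f(x) = 0}. Then for each point x₀ ∈ V there exists an open neighbourhood Ω of x₀ and sets M₀, M₁, …, M_{d−1} ⊆ ℝ^d (some possibly empty) with V ∩ Ω = M₀ ∪ M₁ ∪ ⋯ ∪ M_{d−1}, such that for each d' ∈ {0,…,d−1} and each point x ∈ M_{d'} the following local real analytic parametrisation holds: there exist an open neighbourhood U of x in ℝ^d, an open neighbourhood W of 0 in ℝ^{d'} × ℝ^{d−d'}, and a map φ : W → ℝ^d which is real analytic and a homeomorphism from W onto U, such that M_{d'} ∩ U = { φ(τ, 0) : τ ∈ ℝ^{d'} with (τ, 0) ∈ W }. -/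

import Mathlib

namespace Loj
open Filter Topology
noncomputable def liftSeries {X : Type*} [NormedAddCommGroup X] [NormedSpace ℝ X]
    {κ : Type*} [Fintype κ] (b : κ → X) (p : FormalMultilinearSeries ℝ X ℝ)
    (A : Type*) [NormedRing A] [NormedAlgebra ℝ A] :
    FormalMultilinearSeries ℝ (κ → A) A := fun n =>
  ∑ i : Fin n → κ, (p n (fun k => b (i k))) •
    (ContinuousMultilinearMap.mkPiAlgebraFin ℝ n A).compContinuousLinearMap
      (fun k => ContinuousLinearMap.proj (R := ℝ) (φ := fun _ : κ => A) (i k))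

lemma liftSeries_apply {X : Type*} [NormedAddCommGroup X] [NormedSpace ℝ X]
    {κ : Type*} [Fintype κ] (b : κ → X) (p : FormalMultilinearSeries ℝ X ℝ)
    (A : Type*) [NormedRing A] [NormedAlgebra ℝ A] (n : ℕ) (a : Fin n → κ → A) :
    liftSeries b p A n a = ∑ i : Fin n → κ, (p n (fun k => b (i k))) •
      (List.ofFn (fun k => a k (i k))).prod := by
  simp [liftSeries]

lemma liftSeries_norm {X : Type*} [NormedAddCommGroup X] [NormedSpace ℝ X]
    {κ : Type*} [Fintype κ] (b : κ → X) (p : FormalMultilinearSeries ℝ X ℝ)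
    (A : Type*) [NormedRing A] [NormedAlgebra ℝ A] [NormOneClass A] (n : ℕ) (β : ℝ)
    (hb : ∀ i, ‖b i‖ ≤ β) :
    ‖liftSeries b p A n‖ ≤ ‖p n‖ * (Fintype.card κ * β) ^ n := by
  have hβ : Fintype.card κ * β = 0 ∨ 0 ≤ β := by
    rcases isEmpty_or_nonempty κ with h | ⟨⟨i⟩⟩
    · left; simp
    · right; exact (norm_nonneg _).trans (hb i)
  have hK : 0 ≤ Fintype.card κ * β := by
    rcases hβ with h | h
    · rw [h]
    · positivity
  refine ContinuousMultilinearMap.opNorm_le_bound (by positivity) (fun a => ?_)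
  rw [liftSeries_apply]
  have key : ∀ i : Fin n → κ, ‖(p n (fun k => b (i k))) •
      (List.ofFn (fun k => a k (i k))).prod‖ ≤ ‖p n‖ * β ^ n * ∏ k, ‖a k‖ := by
    intro i
    rw [norm_smul]
    have h1 : ‖p n (fun k => b (i k))‖ ≤ ‖p n‖ * β ^ n := by
      refine ((p n).le_opNorm _).trans ?_
      gcongr
      refine (Finset.prod_le_prod (fun _ _ => norm_nonneg _) (fun k _ => hb (i k))).trans ?_
      simp
    have h2 : ‖(List.ofFn (fun k => a k (i k))).prod‖ ≤ ∏ k, ‖a k‖ := by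
      refine (List.norm_prod_le _).trans ?_
      rw [List.map_ofFn, List.prod_ofFn]
      exact Finset.prod_le_prod (fun _ _ => norm_nonneg _) (fun k _ => norm_le_pi_norm (a k) (i k))
    exact mul_le_mul h1 h2 (norm_nonneg _) ((norm_nonneg _).trans h1)
  refine (norm_sum_le_of_le _ (fun i _ => key i)).trans ?_
  simp only [mul_pow, Finset.sum_const, Finset.card_univ, Fintype.card_pi, Fintype.card_fin,
    Finset.prod_const, nsmul_eq_mul, Nat.cast_pow]
  apply le_of_eq; ring

theorem exists_lift {X : Type*} [NormedAddCommGroup X] [NormedSpace ℝ X]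
    {κ : Type*} [Fintype κ] (b : κ → X) (f : X → ℝ) (hf : AnalyticAt ℝ f 0)
    (A : Type*) [NormedRing A] [NormedAlgebra ℝ A] [NormOneClass A] [CompleteSpace A] :
    ∃ (fA : (κ → A) → A) (r : ℝ), 0 < r ∧ (∀ a, ‖a‖ < r → AnalyticAt ℝ fA a) ∧
      ∀ (χ : A →L[ℝ] ℝ) (a : κ → A) (w : κ → ℝ), ‖a‖ < r → ‖w‖ < r →
        (∀ i c, χ (a i * c) = w i * χ c) → χ (fA a) = f (∑ i, w i • b i) * χ 1 := by
  obtain ⟨p, R, hp⟩ := hf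
  obtain ⟨ρ, hρ0, hρR⟩ := ENNReal.lt_iff_exists_nnreal_btwn.1 hp.r_pos
  have hρ0' : 0 < ρ := by simpa using hρ0
  obtain ⟨C, hC0, hC⟩ := p.norm_mul_pow_le_of_lt_radius (hρR.trans_le hp.r_le)
  obtain ⟨β, hβ⟩ : ∃ β : ℝ, ∀ i, ‖b i‖ ≤ β := ⟨‖b‖, fun i => norm_le_pi_norm b i⟩
  set β' : ℝ := max β 0 with hβ'
  have hβ'0 : 0 ≤ β' := le_max_right _ _
  have hb' : ∀ i, ‖b i‖ ≤ β' := fun i => (hβ i).trans (le_max_left _ _)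
  set K : ℝ := Fintype.card κ * β' with hK
  have hK0 : 0 ≤ K := by positivity
  obtain ⟨r, hr⟩ : ∃ r : NNReal, (r : ℝ) = ρ / (K + 1) := ⟨⟨ρ / (K + 1), by positivity⟩, rfl⟩
  have hr0 : 0 < r := by
    rw [← NNReal.coe_pos, hr]
    have : (0 : ℝ) < ρ := by exact_mod_cast hρ0'
    positivity
  have hrK : (r : ℝ) * (K + 1) = ρ := by
    rw [hr]
    field_simp
  have hrad : (r : ENNReal) ≤ (liftSeries b p A).radius := by
    refine FormalMultilinearSeries.le_radius_of_bound _ C (fun n => ?_)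
    calc ‖liftSeries b p A n‖ * (r : ℝ) ^ n ≤ (‖p n‖ * K ^ n) * (r : ℝ) ^ n := by
          gcongr; exact liftSeries_norm b p A n β' hb'
      _ = ‖p n‖ * (K * r) ^ n := by rw [mul_pow]; ring
      _ ≤ ‖p n‖ * (ρ : ℝ) ^ n := by
          gcongr
          rw [← hrK]
          nlinarith [r.coe_nonneg]
      _ ≤ C := hC n
  have hradpos : 0 < (liftSeries b p A).radius := lt_of_lt_of_le (by simpa using hr0) hrad
  have hps := (liftSeries b p A).hasFPowerSeriesOnBall hradpos
  have hmem : ∀ a : κ → A, ‖a‖ < r → a ∈ Metric.eball (0 : κ → A) (liftSeries b p A).radius := by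
    intro a ha
    refine Metric.eball_subset_eball hrad ?_
    rw [Metric.eball_coe]
    simpa using ha
  refine ⟨(liftSeries b p A).sum, r, by exact_mod_cast hr0, fun a ha => hps.analyticAt_of_mem (hmem a ha), ?_⟩
  intro χ a w ha hw hχ
  have h1 : HasSum (fun n => χ (liftSeries b p A n (fun _ => a))) (χ ((liftSeries b p A).sum a)) := by
    have := hps.hasSum (y := a) (by simpa using hmem a ha)
    rw [zero_add] at this
    exact this.mapL χ
  have h2 : HasSum (fun n => p n (fun _ => ∑ i, w i • b i) * χ 1) (f (∑ i, w i • b i) * χ 1) := by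
    have := hp.hasSum (y := ∑ i, w i • b i) ?_
    · rw [zero_add] at this
      exact this.mul_right _
    · refine Metric.eball_subset_eball hρR.le ?_
      rw [Metric.eball_coe, mem_ball_zero_iff]
      calc ‖∑ i, w i • b i‖ ≤ ∑ i, ‖w‖ * β' := by
            refine norm_sum_le_of_le _ (fun i _ => ?_)
            rw [norm_smul]
            gcongr
            · exact norm_le_pi_norm w i
            · exact hb' i
        _ = ‖w‖ * K := by simp [hK]; ring
        _ ≤ r * K := by gcongr
        _ < r * (K + 1) := by
            have : (0:ℝ) < r := by exact_mod_cast hr0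
            nlinarith
        _ = ρ := hrK
  have hprod : ∀ (n : ℕ) (i : Fin n → κ), χ (List.ofFn (fun k => a (i k))).prod = (∏ k, w (i k)) * χ 1 := by
    intro n
    induction n with
    | zero => intro i; simp
    | succ n ih =>
      intro i
      rw [List.ofFn_succ, List.prod_cons, hχ, ih (fun k => i k.succ), Fin.prod_univ_succ]
      ring
  have h3 : (fun n => χ (liftSeries b p A n (fun _ => a))) =
      (fun n => p n (fun _ => ∑ i, w i • b i) * χ 1) := by
    funext n
    classical
    rw [liftSeries_apply, map_sum, ContinuousMultilinearMap.map_sum, Finset.sum_mul]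
    refine Finset.sum_congr rfl (fun i _ => ?_)
    rw [map_smul, hprod, ContinuousMultilinearMap.map_smul_univ]
    simp only [smul_eq_mul]
    ring
  rw [h3] at h1
  exact h1.unique h2

section gen
variable {B : Type} [NormedAddCommGroup B] [NormedSpace ℝ B]

lemma gen1 {m : ℕ} (i : Fin m) (T : B →L[ℝ] B) (p : (Fin m → ℝ) × B) :
    AnalyticAt ℝ (fun p : (Fin m → ℝ) × B => p.1 i • T p.2) p := by
  refine AnalyticAt.smul ?_ ?_
  · exact ((ContinuousLinearMap.proj (R := ℝ) (φ := fun _ : Fin m => ℝ) i).analyticAt _).comp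
      analyticAt_fst
  · exact (T.analyticAt _).comp analyticAt_snd

lemma gen2 {m : ℕ} (i : Fin m) (T : B →L[ℝ] B) (u : B) :
    HasFDerivAt (fun p : (Fin m → ℝ) × B => p.1 i • T p.2)
      (((ContinuousLinearMap.proj (R := ℝ) (φ := fun _ : Fin m => ℝ) i) ∘L
      ContinuousLinearMap.fst ℝ _ _).smulRight (T u)) (0, u) := by
  have h1 : HasFDerivAt (fun p : (Fin m → ℝ) × B => p.1 i)
      ((ContinuousLinearMap.proj (R := ℝ) (φ := fun _ : Fin m => ℝ) i) ∘L
      ContinuousLinearMap.fst ℝ (Fin m → ℝ) B) (0, u) :=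
    ((ContinuousLinearMap.proj (R := ℝ) (φ := fun _ : Fin m => ℝ) i) ∘L
      ContinuousLinearMap.fst ℝ (Fin m → ℝ) B).hasFDerivAt
  have h2 : HasFDerivAt (fun p : (Fin m → ℝ) × B => T p.2)
      (T ∘L ContinuousLinearMap.snd ℝ (Fin m → ℝ) B) (0, u) :=
    (T ∘L ContinuousLinearMap.snd ℝ (Fin m → ℝ) B).hasFDerivAt
  have h3 := HasFDerivAt.fun_smul h1 h2
  refine h3.congr_fderiv ?_
  ext p <;> simp

lemma gen3 (c : ℝ) : ‖algebraMap ℝ (B →L[ℝ] B) c‖ ≤ ‖c‖ := by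
  refine ContinuousLinearMap.opNorm_le_bound _ (norm_nonneg _) (fun x => ?_)
  rw [Algebra.algebraMap_eq_smul_one]
  simp [norm_smul]

lemma gen4 {n : ℕ} (j : Fin n) (x : Fin n → ℝ) :
    AnalyticAt ℝ (fun x : Fin n → ℝ => algebraMap ℝ (B →L[ℝ] B) (x j)) x := by
  simp only [Algebra.algebraMap_eq_smul_one]
  have h : AnalyticAt ℝ (fun x : Fin n → ℝ => x j) x :=
    ((ContinuousLinearMap.proj (R := ℝ) (φ := fun _ : Fin n => ℝ) j).analyticAt _)
  exact h.smul analyticAt_const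
end gen

/-- Bounded sequences, viewed as power series. -/
abbrev BB := BoundedContinuousFunction ℕ ℝ

noncomputable def shiftL : BB →L[ℝ] BB :=
  LinearMap.mkContinuous
    { toFun := fun b => BoundedContinuousFunction.ofNormedAddCommGroupDiscrete
        (fun n => if n = 0 then 0 else b (n - 1)) ‖b‖ (by
          intro n
          split_ifs
          · simp
          · exact b.norm_coe_le_norm _)
      map_add' := by
        intro x y; ext n
        simp only [BoundedContinuousFunction.coe_ofNormedAddCommGroupDiscrete,
          BoundedContinuousFunction.coe_add, Pi.add_apply]
        split_ifs <;> simp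
      map_smul' := by
        intro c x; ext n
        simp only [BoundedContinuousFunction.coe_ofNormedAddCommGroupDiscrete,
          BoundedContinuousFunction.coe_smul, RingHom.id_apply]
        split_ifs <;> simp }
    1 (by
      intro b
      rw [one_mul, BoundedContinuousFunction.norm_le (norm_nonneg _)]
      intro n
      simp only [LinearMap.coe_mk, AddHom.coe_mk,
        BoundedContinuousFunction.coe_ofNormedAddCommGroupDiscrete]
      split_ifs
      · simp
      · exact b.norm_coe_le_norm _)

lemma shiftL_zero (b : BB) : shiftL b 0 = 0 := rfl
lemma shiftL_succ (b : BB) (n : ℕ) : shiftL b (n + 1) = b n := rfl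
lemma shiftL_norm : ‖shiftL‖ ≤ 1 := LinearMap.mkContinuous_norm_le _ zero_le_one _

lemma shiftL_pow_lt (i : ℕ) (b : BB) (n : ℕ) (h : n < i) : (shiftL ^ i) b n = 0 := by
  induction i generalizing n with
  | zero => omega
  | succ i ih =>
    rw [pow_succ']
    cases n with
    | zero => exact shiftL_zero _
    | succ n => exact ih n (by omega)

lemma shiftL_pow_add (i : ℕ) (b : BB) (n : ℕ) : (shiftL ^ i) b (n + i) = b n := by
  induction i with
  | zero => rfl
  | succ i ih =>
    rw [pow_succ', ← add_assoc]
    exact ih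

noncomputable def backL (m : ℕ) (b : BB) : BB :=
  BoundedContinuousFunction.ofNormedAddCommGroupDiscrete (fun n => b (n + m)) ‖b‖
    (fun _ => b.norm_coe_le_norm _)

lemma backL_apply (m : ℕ) (b : BB) (n : ℕ) : backL m b n = b (n + m) := rfl

lemma shift_back (m : ℕ) (b : BB) (h : ∀ n < m, b n = 0) : (shiftL ^ m) (backL m b) = b := by
  ext n
  rcases lt_or_ge n m with hn | hn
  · rw [shiftL_pow_lt _ _ _ hn, h n hn]
  · obtain ⟨k, rfl⟩ := Nat.exists_eq_add_of_le' hn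
    rw [shiftL_pow_add, backL_apply]

noncomputable def e0 : BB :=
  BoundedContinuousFunction.ofNormedAddCommGroupDiscrete (fun n => if n = 0 then 1 else 0) 1
    (fun n => by split_ifs <;> simp)

lemma exists_ev (z : ℝ) (hz : |z| ≤ 1 / 2) : ∃ e : BB →L[ℝ] ℝ, e e0 = 1 ∧
    (∀ b, e (shiftL b) = z * e b) ∧ ∀ b, |e b - b 0| ≤ |z| * (2 * ‖b‖) := by
  have hb : ∀ (b : BB) (n : ℕ), ‖b n * z ^ n‖ ≤ ‖b‖ * (1 / 2) ^ n := by
    intro b n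
    rw [norm_mul, norm_pow]
    gcongr
    · exact b.norm_coe_le_norm _
    · exact hz
  have hg : ∀ b : BB, HasSum (fun n : ℕ => ‖b‖ * (1 / 2 : ℝ) ^ n) (‖b‖ * 2) :=
    fun b => hasSum_geometric_two.mul_left _
  have hs : ∀ b : BB, Summable (fun n : ℕ => b n * z ^ n) :=
    fun b => Summable.of_norm_bounded (hg b).summable (hb b)
  have hle : ∀ b : BB, ‖∑' n : ℕ, b n * z ^ n‖ ≤ 2 * ‖b‖ := by
    intro b
    rw [mul_comm]
    exact tsum_of_norm_bounded (hg b) (hb b)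
  let e : BB →L[ℝ] ℝ := LinearMap.mkContinuous
    { toFun := fun b => ∑' n : ℕ, b n * z ^ n
      map_add' := by
        intro x y
        rw [← (hs x).tsum_add (hs y)]
        simp [add_mul]
      map_smul' := by
        intro c x
        simp [← tsum_mul_left, mul_assoc] } 2 hle
  have he : ∀ b, e b = ∑' n : ℕ, b n * z ^ n := fun b => rfl
  have hshift : ∀ b, e (shiftL b) = z * e b := by
    intro b
    rw [he, he, (hs (shiftL b)).tsum_eq_zero_add, shiftL_zero, ← tsum_mul_left]
    simp only [shiftL_succ]
    rw [zero_mul, zero_add]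
    congr 1; ext n; ring
  have hdec : ∀ b, |e b - b 0| ≤ |z| * (2 * ‖b‖) := by
    intro b
    have h1 : e b - b 0 = z * e (backL 1 b) := by
      rw [he, he, (hs b).tsum_eq_zero_add, ← tsum_mul_left]
      simp only [backL_apply, pow_zero, mul_one, add_sub_cancel_left]
      congr 1; ext n; ring
    rw [h1, abs_mul]
    gcongr
    refine (hle _).trans ?_
    gcongr
    rw [BoundedContinuousFunction.norm_le (norm_nonneg _)]
    intro n
    exact b.norm_coe_le_norm _
  refine ⟨e, ?_, hshift, hdec⟩
  rw [he, tsum_eq_single 0]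
  · simp [e0]
  · intro n hn
    simp [e0, hn]

instance : Nontrivial BB := ⟨⟨e0, 0, by
  intro h
  have := DFunLike.congr_fun h 0
  simp [e0] at this⟩⟩

/-- Preparation map `(a, u) ↦ (ζ^m + ∑ a_i ζ^i) u`. -/
noncomputable def prep (m : ℕ) (p : (Fin m → ℝ) × BB) : BB :=
  (shiftL ^ m) p.2 + ∑ i : Fin m, p.1 i • (shiftL ^ (i : ℕ)) p.2

noncomputable def prepD (m : ℕ) (u : BB) : (Fin m → ℝ) × BB →L[ℝ] BB :=
  (shiftL ^ m) ∘L ContinuousLinearMap.snd ℝ _ _ + ∑ i : Fin m,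
    ((ContinuousLinearMap.proj (R := ℝ) (φ := fun _ : Fin m => ℝ) i) ∘L
      ContinuousLinearMap.fst ℝ _ _).smulRight ((shiftL ^ (i : ℕ)) u)

lemma prepD_apply (m : ℕ) (u : BB) (p : (Fin m → ℝ) × BB) :
    prepD m u p = (shiftL ^ m) p.2 + ∑ i : Fin m, p.1 i • (shiftL ^ (i : ℕ)) u := by
  simp [prepD]

lemma prep_analyticAt (m : ℕ) (p : (Fin m → ℝ) × BB) : AnalyticAt ℝ (prep m) p := by
  unfold prep
  refine AnalyticAt.add ?_ ?_
  · exact ((shiftL ^ m).analyticAt _).comp analyticAt_snd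
  · refine Finset.analyticAt_fun_sum _ (fun i _ => ?_)
    exact gen1 i (shiftL ^ (i : ℕ)) p

lemma prep_hasFDerivAt (m : ℕ) (u : BB) : HasFDerivAt (prep m) (prepD m u) (0, u) := by
  unfold prep prepD
  refine HasFDerivAt.add ?_ ?_
  · exact ((shiftL ^ m) ∘L ContinuousLinearMap.snd ℝ (Fin m → ℝ) BB).hasFDerivAt
  · refine HasFDerivAt.fun_sum (fun i _ => ?_)
    exact gen2 i (shiftL ^ (i : ℕ)) u

lemma prepD_bij (m : ℕ) (u : BB) (hu : u 0 ≠ 0) : Function.Bijective (prepD m u) := by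
  have hcoef : ∀ (p : (Fin m → ℝ) × BB) (n : ℕ), n < m →
      prepD m u p n = ∑ i : Fin m, p.1 i * (shiftL ^ (i : ℕ)) u n := by
    intro p n hn
    rw [prepD_apply, BoundedContinuousFunction.add_apply, shiftL_pow_lt _ _ _ hn, zero_add]
    simp [BoundedContinuousFunction.sum_apply]
  let T : (Fin m → ℝ) →ₗ[ℝ] (Fin m → ℝ) :=
    { toFun := fun a n => ∑ i : Fin m, a i * (shiftL ^ (i : ℕ)) u n
      map_add' := by
        intro x y; ext n
        simp [add_mul, Finset.sum_add_distrib]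
      map_smul' := by
        intro c x; ext n
        simp [Finset.mul_sum, mul_assoc] }
  have hT : ∀ a n, T a n = ∑ i : Fin m, a i * (shiftL ^ (i : ℕ)) u n := fun a n => rfl
  have hTker : ∀ a, T a = 0 → a = 0 := by
    intro a ha
    have : ∀ k : ℕ, ∀ hk : k < m, a ⟨k, hk⟩ = 0 := by
      intro k
      induction k using Nat.strong_induction_on with
      | _ k ih =>
        intro hk
        have h1 := congrFun ha ⟨k, hk⟩
        rw [hT, Finset.sum_eq_single ⟨k, hk⟩] at h1
        · have h2 := shiftL_pow_add k u 0
          rw [zero_add] at h2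
          simp only [h2, Pi.zero_apply] at h1
          exact (mul_eq_zero.1 h1).resolve_right hu
        · intro i _ hi
          rcases lt_or_ge (i : ℕ) k with h | h
          · rw [show a i = 0 from ih i h i.2, zero_mul]
          · have : (i : ℕ) ≠ k := fun h => hi (Fin.ext h)
            rw [shiftL_pow_lt _ _ _ (show k < (i : ℕ) by omega), mul_zero]
        · simp
    ext ⟨k, hk⟩
    exact this k hk
  have hTinj : Function.Injective T := by
    rw [injective_iff_map_eq_zero]; exact hTker
  have hTsurj : Function.Surjective T := LinearMap.injective_iff_surjective.1 hTinj
  constructor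
  · rw [injective_iff_map_eq_zero]
    rintro ⟨a, v⟩ h
    have ha : a = 0 := by
      apply hTker
      ext n
      rw [hT, ← hcoef (a, v) n n.2, h]; rfl
    subst ha
    rw [prepD_apply] at h
    simp only [Pi.zero_apply, zero_smul, Finset.sum_const_zero, add_zero] at h
    have hv : v = 0 := by
      ext n
      rw [← shiftL_pow_add m v n, h]; rfl
    rw [hv]; rfl
  · intro b
    obtain ⟨a, ha⟩ := hTsurj (fun n => b n)
    let c : BB := b - ∑ i : Fin m, a i • (shiftL ^ (i : ℕ)) u
    have hc : ∀ n < m, c n = 0 := by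
      intro n hn
      have := congrFun ha ⟨n, hn⟩
      rw [hT] at this
      simp only [c, BoundedContinuousFunction.sub_apply, BoundedContinuousFunction.sum_apply,
        BoundedContinuousFunction.smul_apply, smul_eq_mul]
      rw [sub_eq_zero]; exact this.symm
    refine ⟨(a, backL m c), ?_⟩
    rw [prepD_apply]
    simp only
    rw [shift_back m c hc]
    simp [c]

/-- Weierstrass preparation (zero set version). -/
theorem weierstrass (n : ℕ) (f : (Fin n → ℝ) × ℝ → ℝ) (hf : AnalyticAt ℝ f 0)
    (hreg : ¬ ∀ᶠ t in 𝓝 (0 : ℝ), f (0, t) = 0) :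
    ∃ (m : ℕ) (a : (Fin n → ℝ) → (Fin m → ℝ)), AnalyticAt ℝ a 0 ∧
      ∀ᶠ y in 𝓝 (0 : (Fin n → ℝ) × ℝ),
        (f y = 0 ↔ y.2 ^ m + ∑ i : Fin m, a y.1 i * y.2 ^ (i : ℕ) = 0) := by
  let b : Option (Fin n) → (Fin n → ℝ) × ℝ := fun o => o.elim (0, 1) (fun j => (Pi.single j 1, 0))
  obtain ⟨fA, r, hr, hfA, hχ⟩ := exists_lift b f hf (BB →L[ℝ] BB)
  let ε : ℝ := r / 2
  have hε : 0 < ε := by positivity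
  let α : (Fin n → ℝ) → Option (Fin n) → (BB →L[ℝ] BB) := fun x o =>
    o.elim (ε • shiftL) (fun j => algebraMap ℝ (BB →L[ℝ] BB) (x j))
  have hαn : ∀ x, ‖x‖ < r → ‖α x‖ < r := by
    intro x hx
    rw [pi_norm_lt_iff hr]
    rintro (_ | j)
    · change ‖ε • shiftL‖ < r
      refine (shiftL.opNorm_smul_le ε).trans_lt ?_
      rw [Real.norm_of_nonneg hε.le]
      have := shiftL_norm
      simp only [ε]
      nlinarith
    · change ‖algebraMap ℝ (BB →L[ℝ] BB) (x j)‖ < r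
      exact (gen3 (x j)).trans_lt ((norm_le_pi_norm x j).trans_lt hx)
  have hαan : AnalyticAt ℝ α 0 := by
    rw [analyticAt_pi_iff]
    rintro (_ | j)
    · exact analyticAt_const
    · exact gen4 j 0
  let g : (Fin n → ℝ) → BB := fun x => fA (α x) e0
  have hg : AnalyticAt ℝ g 0 := by
    have h1 : AnalyticAt ℝ (fun x => fA (α x)) 0 :=
      (hfA (α 0) (hαn 0 (by simpa using hr))).comp hαan
    exact ((ContinuousLinearMap.apply ℝ BB e0).analyticAt _).comp h1
  have hev : ∀ (x : Fin n → ℝ) (z : ℝ) (e : BB →L[ℝ] ℝ), ‖x‖ < r → |z| ≤ 1 / 2 → e e0 = 1 →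
      (∀ b, e (shiftL b) = z * e b) → e (g x) = f (x, ε * z) := by
    intro x z e hx hz he1 hes
    let w : Option (Fin n) → ℝ := fun o => o.elim (ε * z) x
    have hw : ‖w‖ < r := by
      rw [pi_norm_lt_iff hr]
      rintro (_ | j)
      · change ‖ε * z‖ < r
        rw [norm_mul, Real.norm_of_nonneg hε.le, Real.norm_eq_abs]
        simp only [ε]
        nlinarith
      · exact (norm_le_pi_norm x j).trans_lt hx
    have := hχ (e ∘L ContinuousLinearMap.apply ℝ BB e0) (α x) w (hαn x hx) hw ?_
    · change e (g x) = f _ * e e0 at this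
      rw [this, he1, mul_one]
      congr 1
      rw [Fintype.sum_option]
      simp only [w, b, Option.elim]
      ext j
      · simp [Finset.sum_apply, Prod.fst_sum, Pi.single_apply]
      · simp [Prod.snd_sum]
    · rintro (_ | j) c
      · change e (ε • shiftL (c e0)) = (ε * z) * e (c e0)
        rw [map_smul, hes, smul_eq_mul]; ring
      · change e (x j • (c e0)) = x j * e (c e0)
        rw [map_smul, smul_eq_mul]
  have hg0 : ∃ k, g 0 k ≠ 0 := by
    by_contra hcon
    push Not at hcon
    have hz : g 0 = 0 := by ext k; exact hcon k
    apply hreg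
    have : ∀ᶠ t in 𝓝 (0 : ℝ), |t| < ε / 2 := by
      have := Metric.ball_mem_nhds (0 : ℝ) (show 0 < ε / 2 by positivity)
      filter_upwards [this] with t ht
      simpa using ht
    filter_upwards [this] with t ht
    have hz' : |t / ε| ≤ 1 / 2 := by
      rw [abs_div, abs_of_pos hε, div_le_iff₀ hε]; linarith
    obtain ⟨e, h1, h2, _⟩ := exists_ev (t / ε) hz'
    have := hev 0 (t / ε) e (by simpa using hr) hz' h1 h2
    rw [hz, map_zero, mul_div_cancel₀ _ hε.ne'] at this
    exact this.symm
  classical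
  let m := Nat.find hg0
  have hm : g 0 m ≠ 0 := Nat.find_spec hg0
  have hlt : ∀ k < m, g 0 k = 0 := fun k hk => not_not.1 (Nat.find_min hg0 hk)
  let u0 := backL m (g 0)
  have hu0 : u0 0 ≠ 0 := by
    change g 0 (0 + m) ≠ 0
    rwa [zero_add]
  have hprep0 : prep m (0, u0) = g 0 := by
    simp only [prep, Pi.zero_apply, zero_smul, Finset.sum_const_zero, add_zero]
    exact shift_back m _ hlt
  let L : ((Fin m → ℝ) × BB) ≃L[ℝ] BB := ContinuousLinearEquiv.ofBijective (prepD m u0)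
    (LinearMap.ker_eq_bot.2 (prepD_bij m u0 hu0).1) (LinearMap.range_eq_top.2 (prepD_bij m u0 hu0).2)
  have hL : (L : ((Fin m → ℝ) × BB) →L[ℝ] BB) = prepD m u0 := by
    exact ContinuousLinearMap.ext (fun p => rfl)
  have hstrict : HasStrictFDerivAt (prep m) (L : ((Fin m → ℝ) × BB) →L[ℝ] BB) (0, u0) := by
    have h1 := (prep_analyticAt m (0, u0)).hasStrictFDerivAt
    rwa [(prep_hasFDerivAt m u0).fderiv, ← hL] at h1
  let Θ := hstrict.toOpenPartialHomeomorph (prep m)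
  have hΘs : (0, u0) ∈ Θ.source := hstrict.mem_toOpenPartialHomeomorph_source
  have hΘ0 : Θ (0, u0) = g 0 := hprep0
  have hsymm : AnalyticAt ℝ Θ.symm (g 0) := by
    rw [← hΘ0]
    refine Θ.analyticAt_symm' (i := L) hΘs (prep_analyticAt m _) ?_
    exact hstrict.hasFDerivAt.fderiv
  let ψ : (Fin n → ℝ) → (Fin m → ℝ) × BB := fun x => Θ.symm (g x)
  have hψ : AnalyticAt ℝ ψ 0 := hsymm.comp hg
  have hψ0 : ψ 0 = (0, u0) := by
    change Θ.symm (g 0) = _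
    rw [← hΘ0]; exact Θ.left_inv hΘs
  have hψg : ∀ᶠ x in 𝓝 0, prep m (ψ x) = g x := by
    have : ∀ᶠ x in 𝓝 0, g x ∈ Θ.target := by
      apply hg.continuousAt.eventually_mem
      apply Θ.open_target.mem_nhds
      rw [← hΘ0]; exact Θ.map_source hΘs
    filter_upwards [this] with x hx
    exact Θ.right_inv hx
  refine ⟨m, fun x i => ε ^ (m - (i : ℕ)) * (ψ x).1 i, ?_, ?_⟩
  · rw [analyticAt_pi_iff]
    intro i
    refine analyticAt_const.mul ?_
    exact ((ContinuousLinearMap.proj (R := ℝ) (φ := fun _ : Fin m => ℝ) i).analyticAt _).comp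
      (analyticAt_fst.comp hψ)
  · have hfst : Tendsto Prod.fst (𝓝 (0 : (Fin n → ℝ) × ℝ)) (𝓝 0) := continuous_fst.tendsto _
    have hsnd : Tendsto Prod.snd (𝓝 (0 : (Fin n → ℝ) × ℝ)) (𝓝 0) := continuous_snd.tendsto _
    have h1 := hfst.eventually hψg
    have h2 : ∀ᶠ y in 𝓝 (0 : (Fin n → ℝ) × ℝ), ‖y.1‖ < r :=
      hfst.eventually (by
        filter_upwards [Metric.ball_mem_nhds (0 : Fin n → ℝ) hr] with x hx
        simpa using hx)
    have h3 : ∀ᶠ y in 𝓝 (0 : (Fin n → ℝ) × ℝ), |y.2| < ε / 2 :=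
      hsnd.eventually (by
        filter_upwards [Metric.ball_mem_nhds (0 : ℝ) (show 0 < ε / 2 by positivity)] with x hx
        simpa using hx)
    have h4 : ∀ᶠ y in 𝓝 (0 : (Fin n → ℝ) × ℝ),
        |y.2 / ε| * (2 * ‖(ψ y.1).2‖) < |(ψ y.1).2 0| := by
      have hc : ContinuousAt (fun y : (Fin n → ℝ) × ℝ => (ψ y.1).2) 0 := by
        have : ContinuousAt ψ (0 : (Fin n → ℝ) × ℝ).1 := hψ.continuousAt
        exact (ContinuousAt.comp (f := Prod.fst) this continuousAt_fst).snd
      have hL : ContinuousAt (fun y : (Fin n → ℝ) × ℝ => |y.2 / ε| * (2 * ‖(ψ y.1).2‖)) 0 := by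
        have : ContinuousAt (fun y : (Fin n → ℝ) × ℝ => y.2 / ε) 0 :=
          (continuous_snd.div_const ε).continuousAt
        exact this.abs.mul (hc.norm.const_mul 2)
      have hR : ContinuousAt (fun y : (Fin n → ℝ) × ℝ => |(ψ y.1).2 0|) 0 := by
        have : ContinuousAt (fun y : (Fin n → ℝ) × ℝ => (ψ y.1).2 0) 0 :=
          (BoundedContinuousFunction.evalCLM ℝ (0 : ℕ)).continuous.continuousAt.comp hc
        exact this.abs
      refine hL.eventually_lt hR ?_
      simp only [Prod.fst_zero, Prod.snd_zero, hψ0]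
      simpa using hu0
    filter_upwards [h1, h2, h3, h4] with y h1 h2 h3 h4
    have hz' : |y.2 / ε| ≤ 1 / 2 := by
      rw [abs_div, abs_of_pos hε, div_le_iff₀ hε]; linarith
    obtain ⟨e, he1, he2, he3⟩ := exists_ev (y.2 / ε) hz'
    have hfy := hev y.1 (y.2 / ε) e h2 hz' he1 he2
    rw [mul_div_cancel₀ _ hε.ne'] at hfy
    have hne : e (ψ y.1).2 ≠ 0 := by
      intro h0
      have := he3 (ψ y.1).2
      rw [h0, zero_sub, abs_neg] at this
      linarith
    have hpow : ∀ (i : ℕ) b, e ((shiftL ^ i) b) = (y.2 / ε) ^ i * e b := by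
      intro i b
      induction i with
      | zero => simp
      | succ i ih =>
        rw [pow_succ']
        change e (shiftL ((shiftL ^ i) b)) = _
        rw [he2, ih]; ring
    have hfac : f y = ((y.2 / ε) ^ m + ∑ i : Fin m, (ψ y.1).1 i * (y.2 / ε) ^ (i : ℕ)) *
        e (ψ y.1).2 := by
      rw [show f y = f (y.1, y.2) from rfl, ← hfy, ← h1, prep, map_add, hpow, map_sum, add_mul,
        Finset.sum_mul]
      congr 1
      refine Finset.sum_congr rfl (fun i _ => ?_)
      rw [map_smul, hpow, smul_eq_mul]; ring
    have hmul : ε ^ m * ((y.2 / ε) ^ m + ∑ i : Fin m, (ψ y.1).1 i * (y.2 / ε) ^ (i : ℕ)) =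
        y.2 ^ m + ∑ i : Fin m, ε ^ (m - (i : ℕ)) * (ψ y.1).1 i * y.2 ^ (i : ℕ) := by
      rw [mul_add, Finset.mul_sum]
      congr 1
      · rw [← mul_pow, mul_div_cancel₀ _ hε.ne']
      · refine Finset.sum_congr rfl (fun i _ => ?_)
        have : ε ^ m = ε ^ (m - (i : ℕ)) * ε ^ (i : ℕ) := by
          rw [← pow_add]; congr 1; have := i.2; omega
        have h5 : ε ^ (i : ℕ) * (y.2 / ε) ^ (i : ℕ) = y.2 ^ (i : ℕ) := by
          rw [← mul_pow, mul_div_cancel₀ _ hε.ne']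
        rw [this, ← h5]; ring
    rw [← hmul, hfac]
    simp [hne, hε.ne']

section disc
open Polynomial

lemma analyticAt_polyfun (m : ℕ) (Q : MvPolynomial (Fin m) ℝ[X]) (c : Fin m → (Fin m → ℝ) → ℝ)
    (hc : ∀ i a, AnalyticAt ℝ (c i) a) (p : (Fin m → ℝ) × ℝ) :
    AnalyticAt ℝ (fun p : (Fin m → ℝ) × ℝ =>
      MvPolynomial.eval₂Hom (Polynomial.evalRingHom p.2) (fun i => c i p.1) Q) p := by
  induction Q using MvPolynomial.induction_on with
  | C a =>
    simp only [MvPolynomial.eval₂Hom_C, Polynomial.coe_evalRingHom]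
    have h : AnalyticAt ℝ (fun p : (Fin m → ℝ) × ℝ => p.2) p := analyticAt_snd
    have := h.aeval_polynomial a
    simpa using this
  | add P Q hP hQ =>
    simp only [map_add]
    exact hP.add hQ
  | mul_X P i hP =>
    simp only [map_mul, MvPolynomial.eval₂Hom_X']
    refine hP.mul ?_
    exact (hc i p.1).comp analyticAt_fst

lemma symlift (m : ℕ) (Q : MvPolynomial (Fin m) ℝ[X]) (hQ : Q.IsSymmetric) :
    ∃ g : (Fin m → ℝ) × ℝ → ℝ, (∀ p, AnalyticAt ℝ g p) ∧
      ∀ (a : Fin m → ℝ) (r : Fin m → ℂ),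
        (X ^ m + ∑ i : Fin m, C (a i : ℂ) * X ^ (i : ℕ) : ℂ[X]) = ∏ i, (X - C (r i)) →
        ∀ z : ℝ, ((g (a, z) : ℝ) : ℂ) =
          MvPolynomial.eval₂Hom ((algebraMap ℝ ℂ).comp (Polynomial.evalRingHom z)) r Q := by
  obtain ⟨Qt, hQt⟩ := MvPolynomial.esymmAlgHom_fin_surjective (m := m) (n := m) ℝ[X] le_rfl ⟨Q, hQ⟩
  have hQt' : MvPolynomial.aeval (fun i : Fin m => MvPolynomial.esymm (Fin m) ℝ[X] (i + 1)) Qt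
      = Q := by
    rw [← MvPolynomial.esymmAlgHom_apply, hQt]
  let c : Fin m → (Fin m → ℝ) → ℝ := fun i a => (-1) ^ ((i : ℕ) + 1) * a i.rev
  have hc : ∀ i a, AnalyticAt ℝ (c i) a := by
    intro i a
    refine analyticAt_const.mul ?_
    exact ((ContinuousLinearMap.proj (R := ℝ) (φ := fun _ : Fin m => ℝ) i.rev).analyticAt _)
  refine ⟨_, analyticAt_polyfun m Qt c hc, ?_⟩
  intro a r hr z
  have hes : ∀ i : Fin m, (Finset.univ.val.map r).esymm (i + 1) = ((c i a : ℝ) : ℂ) := by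
    intro i
    have hcard : Multiset.card (Finset.univ.val.map r) = m := by simp
    have h1 := Multiset.prod_X_sub_C_coeff (Finset.univ.val.map r) (k := (i.rev : ℕ))
      (by rw [hcard]; exact i.rev.2.le)
    rw [hcard, Multiset.map_map] at h1
    have h2 : (Multiset.map ((fun t => X - C t) ∘ r) Finset.univ.val).prod =
      ∏ i, (X - C (r i)) := rfl
    rw [h2, ← hr] at h1
    have h3 : m - (i.rev : ℕ) = i + 1 := by
      rw [Fin.val_rev]; have := i.2; omega
    rw [h3] at h1
    have h4 : (X ^ m + ∑ i : Fin m, C (a i : ℂ) * X ^ (i : ℕ) : ℂ[X]).coeff (i.rev : ℕ)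
        = (a i.rev : ℂ) := by
      rw [coeff_add, coeff_X_pow, if_neg (by have := i.rev.2; omega), zero_add,
        finsetSum_coeff, Finset.sum_eq_single i.rev]
      · simp
      · intro j _ hj
        rw [coeff_C_mul, coeff_X_pow, if_neg (fun h => hj (Fin.ext h.symm)), mul_zero]
      · simp
    rw [h4] at h1
    simp only [c]
    push_cast
    rw [h1, ← mul_assoc, ← mul_pow]
    simp
  rw [← hQt']
  set φ : ℝ[X] →+* ℂ := (algebraMap ℝ ℂ).comp (Polynomial.evalRingHom z) with hφ
  have key : (MvPolynomial.eval₂Hom φ r).comp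
      (MvPolynomial.aeval (fun i : Fin m => MvPolynomial.esymm (Fin m) ℝ[X] (i + 1)) :
        MvPolynomial (Fin m) ℝ[X] →ₐ[ℝ[X]] MvPolynomial (Fin m) ℝ[X]).toRingHom =
      (algebraMap ℝ ℂ).comp (MvPolynomial.eval₂Hom (Polynomial.evalRingHom z) (fun i => c i a)) := by
    refine MvPolynomial.ringHom_ext ?_ ?_
    · intro p
      simp [φ]
    · intro i
      have h5 : (MvPolynomial.eval₂Hom φ r) (MvPolynomial.esymm (Fin m) ℝ[X] (i + 1)) =
          (Finset.univ.val.map r).esymm (i + 1) := by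
        rw [Finset.esymm_map_val]
        simp [MvPolynomial.esymm]
      simp only [RingHom.comp_apply, AlgHom.toRingHom_eq_coe, RingHom.coe_coe,
        MvPolynomial.aeval_X, MvPolynomial.eval₂Hom_X']
      rw [h5, hes]; rfl
  exact (DFunLike.congr_fun key Qt).symm

/-- The basic symmetric expressions. -/
noncomputable def num {A : Type*} [CommRing A] {m : ℕ} (s : ℕ) (x : Fin m → A) (y : Fin m → A) :
    A :=
  ∑ τ : Fin s → Fin m, (∏ p ∈ (Finset.univ : Finset (Fin s)).offDiag, (x (τ p.1) - x (τ p.2))) *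
    ∏ i, y (τ i)

lemma num_map {A A' : Type*} [CommRing A] [CommRing A'] {m : ℕ} (s : ℕ) (x y : Fin m → A)
    (φ : A →+* A') : φ (num s x y) = num s (fun i => φ (x i)) (fun i => φ (y i)) := by
  simp [num, map_sum, map_prod]

lemma num_perm {A : Type*} [CommRing A] {m : ℕ} (s : ℕ) (x y : Fin m → A)
    (e : Equiv.Perm (Fin m)) : num s (fun i => x (e i)) (fun i => y (e i)) = num s x y := by
  unfold num
  exact Fintype.sum_equiv ((Equiv.refl (Fin s)).arrowCongr e) _ _ (fun τ => rfl)


lemma num_gt {m : ℕ} (s : ℕ) (x : Fin m → ℂ) (y : Fin m → ℂ)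
    (hs : (Finset.univ.image x).card < s) : num s x y = 0 := by
  unfold num
  refine Finset.sum_eq_zero (fun τ _ => ?_)
  obtain ⟨i, -, j, -, hij, h⟩ := Finset.exists_ne_map_eq_of_card_lt_of_maps_to
    (s := (Finset.univ : Finset (Fin s))) (t := Finset.univ.image x) (f := fun i => x (τ i))
    (by simpa using hs) (fun i _ => by simp)
  rw [Finset.prod_eq_zero (i := (i, j)), zero_mul]
  · simp [hij]
  · simp only; rw [sub_eq_zero]; exact h

lemma num_eq {m : ℕ} (x : Fin m → ℂ) : ∃ N : ℂ, N ≠ 0 ∧ ∀ y : ℂ → ℂ,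
    num (Finset.univ.image x).card x (fun i => y (x i)) = N * ∏ w ∈ Finset.univ.image x, y w := by
  classical
  set T := Finset.univ.image x with hT
  set t := T.card with ht
  let Δ : ℂ := ∏ p ∈ T.offDiag, (p.1 - p.2)
  have hΔ : Δ ≠ 0 := by
    refine Finset.prod_ne_zero_iff.2 (fun p hp => ?_)
    rw [Finset.mem_offDiag] at hp
    exact sub_ne_zero.2 hp.2.2
  let G : Finset (Fin t → Fin m) := Finset.univ.filter (fun τ => Function.Injective (x ∘ τ))
  have hG : G.Nonempty := by
    have e := T.equivFin.symm
    have hx : ∀ w : T, ∃ i, x i = w := by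
      intro w
      obtain ⟨i, -, hi⟩ := Finset.mem_image.1 w.2
      exact ⟨i, hi⟩
    choose g hg using hx
    refine ⟨fun i => g (e i), ?_⟩
    simp only [G, Finset.mem_filter, Finset.mem_univ, true_and]
    intro i j hij
    simp only [Function.comp, hg] at hij
    exact e.injective (Subtype.ext hij)
  refine ⟨(G.card : ℂ) * Δ, mul_ne_zero (by exact_mod_cast hG.card_ne_zero) hΔ, ?_⟩
  intro y
  unfold num
  rw [← Finset.sum_subset (Finset.subset_univ G)]
  · rw [Finset.sum_congr rfl (g := fun _ => Δ * ∏ w ∈ T, y w)]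
    · rw [Finset.sum_const, nsmul_eq_mul, mul_assoc]
    · intro τ hτ
      have hinj : Function.Injective (x ∘ τ) := by simpa [G] using hτ
      have him : Finset.univ.image (x ∘ τ) = T := by
        apply Finset.eq_of_subset_of_card_le
        · intro w hw
          simp only [Finset.mem_image, Finset.mem_univ, true_and, Function.comp] at hw
          obtain ⟨i, rfl⟩ := hw
          simp [hT]
        · rw [Finset.card_image_of_injective _ hinj]; simp [ht]
      congr 1
      · have : T.offDiag = (Finset.univ : Finset (Fin t)).offDiag.image
            (Prod.map (x ∘ τ) (x ∘ τ)) := by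
          ext ⟨u, v⟩
          rw [← him]
          simp only [Finset.mem_offDiag, Finset.mem_image, Finset.mem_univ, true_and, Prod.exists,
            Prod.map_apply, Prod.mk.injEq]
          constructor
          · rintro ⟨⟨i, rfl⟩, ⟨j, rfl⟩, h⟩
            exact ⟨i, j, fun h' => h (by rw [h']), rfl, rfl⟩
          · rintro ⟨i, j, h, rfl, rfl⟩
            exact ⟨⟨i, rfl⟩, ⟨j, rfl⟩, fun h' => h (hinj h')⟩
        simp only [Δ]
        rw [this, Finset.prod_image]
        · rfl
        · exact (Function.Injective.prodMap hinj hinj).injOn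
      · rw [← him, Finset.prod_image hinj.injOn]; rfl
  · intro τ _ hτ
    have hinj : ¬ Function.Injective (x ∘ τ) := by simpa [G] using hτ
    rw [Function.not_injective_iff] at hinj
    obtain ⟨i, j, h, hij⟩ := hinj
    rw [Finset.prod_eq_zero (i := (i, j)), zero_mul]
    · simp [hij]
    · simp only; rw [sub_eq_zero]; exact h

theorem disc (m : ℕ) : ∃ (D : Fin (m + 1) → (Fin m → ℝ) → ℝ)
    (q : Fin (m + 1) → (Fin m → ℝ) × ℝ → ℝ),
    (∀ s a, AnalyticAt ℝ (D s) a) ∧ (∀ s p, AnalyticAt ℝ (q s) p) ∧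
    (∀ a, ∃ s, D s a ≠ 0) ∧
    ∀ a s, D s a ≠ 0 → (∀ j, s < j → D j a = 0) → ∀ z : ℝ,
      (q s (a, z) = 0 ↔ z ^ m + ∑ i : Fin m, a i * z ^ (i : ℕ) = 0) ∧
      (z ^ m + ∑ i : Fin m, a i * z ^ (i : ℕ) = 0 → deriv (fun z => q s (a, z)) z ≠ 0) := by
  classical
  let DQ : ℕ → MvPolynomial (Fin m) ℝ[X] := fun s => num s MvPolynomial.X (fun _ => 1)
  let QQ : ℕ → MvPolynomial (Fin m) ℝ[X] := fun s =>
    num s MvPolynomial.X (fun i => MvPolynomial.C X - MvPolynomial.X i)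
  have hDQ : ∀ s, (DQ s).IsSymmetric := by
    intro s e
    have := num_map s (MvPolynomial.X : Fin m → MvPolynomial (Fin m) ℝ[X]) (fun _ => 1)
      (MvPolynomial.rename e : MvPolynomial (Fin m) ℝ[X] →ₐ[ℝ[X]] MvPolynomial (Fin m) ℝ[X]).toRingHom
    refine this.trans ?_
    simp only [AlgHom.toRingHom_eq_coe, RingHom.coe_coe, MvPolynomial.rename_X, map_one]
    exact num_perm s MvPolynomial.X (fun _ => 1) e
  have hQQ : ∀ s, (QQ s).IsSymmetric := by
    intro s e
    have := num_map s (MvPolynomial.X : Fin m → MvPolynomial (Fin m) ℝ[X])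
      (fun i => MvPolynomial.C X - MvPolynomial.X i)
      (MvPolynomial.rename e : MvPolynomial (Fin m) ℝ[X] →ₐ[ℝ[X]] MvPolynomial (Fin m) ℝ[X]).toRingHom
    refine this.trans ?_
    simp only [AlgHom.toRingHom_eq_coe, RingHom.coe_coe, MvPolynomial.rename_X, map_sub,
      MvPolynomial.rename_C]
    exact num_perm s MvPolynomial.X (fun i => MvPolynomial.C X - MvPolynomial.X i) e
  choose gD hgDan hgD using fun s => symlift m (DQ s) (hDQ s)
  choose gQ hgQan hgQ using fun s => symlift m (QQ s) (hQQ s)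
  -- roots
  have hroots : ∀ a : Fin m → ℝ, ∃ r : Fin m → ℂ,
      (X ^ m + ∑ i : Fin m, C (a i : ℂ) * X ^ (i : ℕ) : ℂ[X]) = ∏ i, (X - C (r i)) := by
    intro a
    set P : ℂ[X] := X ^ m + ∑ i : Fin m, C (a i : ℂ) * X ^ (i : ℕ) with hP
    have hdeg : (∑ i : Fin m, C (a i : ℂ) * X ^ (i : ℕ) : ℂ[X]).degree < m := by
      refine (Polynomial.degree_sum_le _ _).trans_lt ?_
      rw [Finset.sup_lt_iff (by exact WithBot.bot_lt_coe m)]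
      intro i _
      refine (degree_C_mul_X_pow_le _ _).trans_lt ?_
      exact_mod_cast i.2
    have hmon : P.Monic := monic_X_pow_add hdeg
    have hnd : P.natDegree = m := by
      apply natDegree_eq_of_degree_eq_some
      rw [hP, degree_add_eq_left_of_degree_lt, degree_X_pow]
      rwa [degree_X_pow]
    have hsp : P.Splits := IsAlgClosed.splits P
    have hcard : Multiset.card P.roots = m := by rw [← hnd]; exact splits_iff_card_roots.1 hsp
    have hprod : (P.roots.map (fun w => X - C w)).prod = P :=
      prod_multiset_X_sub_C_of_monic_of_roots_card_eq hmon (by rw [hcard, hnd])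
    obtain ⟨l, hl⟩ : ∃ l : List ℂ, (l : Multiset ℂ) = P.roots := Quot.exists_rep _
    have hlen : l.length = m := by rw [← hcard, ← hl]; simp
    subst hlen
    refine ⟨fun i => l.get i, ?_⟩
    conv_lhs => rw [← hprod, ← hl]
    rw [Multiset.map_coe, Multiset.prod_coe, ← List.prod_ofFn]
    congr 1
    conv_lhs => rw [← List.ofFn_get l]
    rw [List.map_ofFn]; rfl
  have hDval : ∀ (a : Fin m → ℝ) (r : Fin m → ℂ),
      (X ^ m + ∑ i : Fin m, C (a i : ℂ) * X ^ (i : ℕ) : ℂ[X]) = ∏ i, (X - C (r i)) →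
      ∀ s, ((gD s (a, 0) : ℝ) : ℂ) = num s r (fun _ => 1) := by
    intro a r hr s
    rw [hgD s a r hr 0, num_map]
    simp
  have hQval : ∀ (a : Fin m → ℝ) (r : Fin m → ℂ),
      (X ^ m + ∑ i : Fin m, C (a i : ℂ) * X ^ (i : ℕ) : ℂ[X]) = ∏ i, (X - C (r i)) →
      ∀ s (z : ℝ), ((gQ s (a, z) : ℝ) : ℂ) = num s r (fun i => (z : ℂ) - r i) := by
    intro a r hr s z
    rw [hgQ s a r hr z, num_map]
    simp
  refine ⟨fun s a => gD s (a, 0), fun s p => gQ s p, ?_, fun s p => hgQan s p, ?_, ?_⟩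
  · intro s a
    exact AnalyticAt.fun_comp (g := gD s) (hgDan s (a, 0))
      (f := fun a : Fin m → ℝ => (a, (0 : ℝ))) (analyticAt_id.prod analyticAt_const)
  · intro a
    obtain ⟨r, hr⟩ := hroots a
    have hle : (Finset.univ.image r).card ≤ m := by
      refine Finset.card_image_le.trans ?_
      simp
    refine ⟨⟨(Finset.univ.image r).card, by omega⟩, ?_⟩
    intro h0
    have h1 := hDval a r hr (Finset.univ.image r).card
    obtain ⟨N, hN, hNy⟩ := num_eq r
    have h2 := hNy (fun _ => 1)
    rw [h2] at h1
    simp only at h0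
    rw [h0] at h1
    simp at h1
    exact hN h1.symm
  · intro a s hs hj z
    obtain ⟨r, hr⟩ := hroots a
    have hle : (Finset.univ.image r).card ≤ m := by
      refine Finset.card_image_le.trans ?_
      simp
    obtain ⟨N, hN, hNy⟩ := num_eq r
    set T := Finset.univ.image r with hT
    have hst : (s : ℕ) = T.card := by
      rcases lt_trichotomy (s : ℕ) T.card with h | h | h
      · exfalso
        have h0 := hj ⟨T.card, by omega⟩ h
        have h1 := hDval a r hr T.card
        rw [hNy (fun _ => 1)] at h1
        simp only at h0
        rw [h0] at h1
        simp at h1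
        exact hN h1.symm
      · exact h
      · exfalso
        have h1 := hDval a r hr s
        rw [num_gt _ _ _ h] at h1
        exact hs (by exact_mod_cast h1)
    let G : ℂ[X] := ∏ w ∈ T, (X - C w)
    have hq : ∀ z : ℝ, ((gQ s (a, z) : ℝ) : ℂ) = N * G.eval (z : ℂ) := by
      intro z
      rw [hQval a r hr, hst, hNy (fun w => (z : ℂ) - w)]
      simp [G, eval_prod]
    have hPG : ∀ z : ℝ, (z ^ m + ∑ i : Fin m, a i * z ^ (i : ℕ) = 0) ↔ G.eval (z : ℂ) = 0 := by
      intro z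
      have h1 := congrArg (Polynomial.eval (z : ℂ)) hr
      have h2 : ((z ^ m + ∑ i : Fin m, a i * z ^ (i : ℕ) : ℝ) : ℂ) = ∏ i, ((z : ℂ) - r i) := by
        rw [eval_prod] at h1
        simp only [eval_add, eval_pow, eval_X, eval_finsetSum, eval_mul, eval_C, eval_sub] at h1
        rw [← h1]
        push_cast
        rfl
      rw [← Complex.ofReal_eq_zero, h2]
      simp only [G, eval_prod, Finset.prod_eq_zero_iff, eval_sub, eval_X, eval_C]
      simp [hT]
    refine ⟨?_, ?_⟩
    · rw [hPG, ← Complex.ofReal_eq_zero, hq]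
      simp [hN]
    · intro hz hd
      rw [hPG] at hz
      have hdiff : DifferentiableAt ℝ (fun z => gQ s (a, z)) z := by
        have : AnalyticAt ℝ (fun z => gQ s (a, z)) z := AnalyticAt.fun_comp (g := gQ s) (hgQan s (a, z))
          (f := fun z : ℝ => (a, z)) (analyticAt_const.prod analyticAt_id)
        exact this.differentiableAt
      have h1 := hdiff.hasDerivAt.ofReal_comp
      have h2 : HasDerivAt (fun z : ℝ => N * G.eval (z : ℂ)) (N * G.derivative.eval (z : ℂ)) z :=
        ((G.hasDerivAt (z : ℂ)).const_mul N).comp_ofReal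
      have h3 : (fun z : ℝ => ((gQ s (a, z) : ℝ) : ℂ)) = fun z : ℝ => N * G.eval (z : ℂ) :=
        funext hq
      rw [h3] at h1
      have h4 := h1.unique h2
      rw [hd, Complex.ofReal_zero] at h4
      have hsep : G.Separable := by
        simp only [G]
        rw [separable_prod_X_sub_C_iff']
        intro x _ y _ h; exact h
      have := hsep.eval₂_derivative_ne_zero (RingHom.id ℂ) (x := (z : ℂ)) (by simpa using hz)
      apply this
      rcases mul_eq_zero.1 h4.symm with h | h
      · exact absurd h hN
      · simpa using h
end disc

section step

lemma deriv_snd {E : Type*} [NormedAddCommGroup E] [NormedSpace ℝ E] (Q : E × ℝ → ℝ) (y : E × ℝ)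
    (hQ : DifferentiableAt ℝ Q y) : deriv (fun z => Q (y.1, z)) y.2 = fderiv ℝ Q y (0, 1) := by
  have h1 : HasDerivAt (fun z : ℝ => (y.1, z)) ((0 : E), (1 : ℝ)) y.2 :=
    (hasDerivAt_const y.2 y.1).prodMk (hasDerivAt_id y.2)
  have h2 : HasFDerivAt Q (fderiv ℝ Q y) ((fun z : ℝ => (y.1, z)) y.2) := hQ.hasFDerivAt
  exact (h2.comp_hasDerivAt y.2 h1).deriv

lemma implicit_real {E : Type*} [NormedAddCommGroup E] [NormedSpace ℝ E] [CompleteSpace E]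
    (Q : E × ℝ → ℝ) (y : E × ℝ) (hQ : AnalyticAt ℝ Q y) (h0 : Q y = 0)
    (hd : fderiv ℝ Q y (0, 1) ≠ 0) :
    ∃ ρ : E → ℝ, Tendsto ρ (𝓝 y.1) (𝓝 y.2) ∧ ∀ᶠ v in 𝓝 y, (Q v = 0 ↔ ρ v.1 = v.2) := by
  have hinv : (fderiv ℝ Q y ∘L .inr ℝ E ℝ).IsInvertible := by
    refine ⟨ContinuousLinearEquiv.smulLeft (Units.mk0 _ hd), ?_⟩
    ext
    simp
  have hs := hQ.hasStrictFDerivAt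
  refine ⟨_, hs.tendsto_implicitFunctionOfProdDomain hinv, ?_⟩
  have := hs.eventually_apply_eq_iff_implicitFunctionOfProdDomain hinv
  rwa [h0] at this

lemma implicit_compare {E : Type*} [NormedAddCommGroup E] [NormedSpace ℝ E] [CompleteSpace E]
    (Q₁ Q₂ : E × ℝ → ℝ) (y : E × ℝ) (h1 : AnalyticAt ℝ Q₁ y) (h2 : AnalyticAt ℝ Q₂ y)
    (h10 : Q₁ y = 0) (h20 : Q₂ y = 0) (hd1 : fderiv ℝ Q₁ y (0, 1) ≠ 0)
    (hd2 : fderiv ℝ Q₂ y (0, 1) ≠ 0) (N : E → Prop)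
    (h : ∀ᶠ v in 𝓝 y, N v.1 → Q₂ v = 0 → Q₁ v = 0) :
    ∀ᶠ v in 𝓝 y, N v.1 → Q₁ v = 0 → Q₂ v = 0 := by
  obtain ⟨ρ₁, ht1, he1⟩ := implicit_real Q₁ y h1 h10 hd1
  obtain ⟨ρ₂, ht2, he2⟩ := implicit_real Q₂ y h2 h20 hd2
  have ht : Tendsto (fun x => (x, ρ₂ x)) (𝓝 y.1) (𝓝 y) := by
    have := tendsto_id.prodMk_nhds ht2
    exact this
  have hx : ∀ᶠ x in 𝓝 y.1, N x → ρ₁ x = ρ₂ x := by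
    filter_upwards [ht.eventually h, ht.eventually he1, ht.eventually he2] with x h he1 he2 hN
    exact he1.1 (h hN (he2.2 rfl))
  have hx' : ∀ᶠ v in 𝓝 y, N v.1 → ρ₁ v.1 = ρ₂ v.1 :=
    (continuous_fst.tendsto y).eventually hx
  filter_upwards [hx', he1, he2] with v hx he1 he2 hN hv
  rw [he2, ← hx hN]
  exact he1.1 hv

theorem fiber (n : ℕ) (f : (Fin n → ℝ) × ℝ → ℝ) (hf : AnalyticAt ℝ f 0)
    (hreg : ¬ ∀ᶠ t in 𝓝 (0 : ℝ), f (0, t) = 0) :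
    ∃ (m : ℕ) (D : Fin (m + 1) → (Fin n → ℝ) → ℝ), (∀ s, AnalyticAt ℝ (D s) 0) ∧
      ∀ σ : (Fin n → ℝ) → ℕ,
        (∀ᶠ x in 𝓝 0, ∀ s, D s x = 0 → ∀ᶠ x' in 𝓝 x, σ x' = σ x → D s x' = 0) →
        ∀ᶠ y in 𝓝 (0 : (Fin n → ℝ) × ℝ), ∃ Q : (Fin n → ℝ) × ℝ → ℝ, AnalyticAt ℝ Q y ∧
          (∀ᶠ v in 𝓝 y, σ v.1 = σ y.1 → (Q v = 0 ↔ f v = 0)) ∧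
          (f y = 0 → fderiv ℝ Q y (0, 1) ≠ 0) := by
  obtain ⟨m, a, ha, hfa⟩ := weierstrass n f hf hreg
  obtain ⟨D, q, hD, hq, hDex, hDq⟩ := disc m
  refine ⟨m, fun s x => D s (a x), fun s => AnalyticAt.fun_comp (hD s _) ha, ?_⟩
  intro σ hσ
  have hfst : Tendsto Prod.fst (𝓝 (0 : (Fin n → ℝ) × ℝ)) (𝓝 0) := continuous_fst.tendsto _
  filter_upwards [hfst.eventually hσ, hfst.eventually ha.eventually_analyticAt,
    hfa.eventually_nhds] with y hσ ha hfa
  classical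
  have hex : (Finset.univ.filter (fun s => D s (a y.1) ≠ 0)).Nonempty := by
    obtain ⟨s, hs⟩ := hDex (a y.1)
    exact ⟨s, by simpa using hs⟩
  let s := Finset.max' _ hex
  have hs : D s (a y.1) ≠ 0 := by
    have := Finset.max'_mem _ hex
    simpa using (Finset.mem_filter.1 this).2
  have hsj : ∀ j, s < j → D j (a y.1) = 0 := by
    intro j hj
    by_contra hne
    have : j ≤ s := Finset.le_max' _ j (by simpa using hne)
    exact absurd hj (not_lt.2 this)
  have hpair : AnalyticAt ℝ (fun v : (Fin n → ℝ) × ℝ => (a v.1, v.2)) y :=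
    (AnalyticAt.fun_comp (g := a) (f := Prod.fst) ha analyticAt_fst).prod analyticAt_snd
  have hQan : AnalyticAt ℝ (fun v : (Fin n → ℝ) × ℝ => q s (a v.1, v.2)) y :=
    AnalyticAt.fun_comp (g := q s) (hq s _) hpair
  refine ⟨fun v => q s (a v.1, v.2), hQan, ?_, ?_⟩
  · have hcont : ∀ᶠ x in 𝓝 y.1, D s (a x) ≠ 0 :=
      (AnalyticAt.fun_comp (g := D s) (hD s _) ha).continuousAt.eventually_ne hs
    have hzero : ∀ᶠ x in 𝓝 y.1, ∀ j, s < j → σ x = σ y.1 → D j (a x) = 0 := by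
      rw [eventually_all]
      intro j
      by_cases hj : s < j
      · filter_upwards [hσ j (hsj j hj)] with x hx _ h
        exact hx h
      · exact Eventually.of_forall (fun x h => absurd h hj)
    have ht := continuous_fst.tendsto y
    filter_upwards [ht.eventually hcont, ht.eventually hzero, hfa] with v h1 h2 h3 hv
    rw [h3]
    exact (hDq (a v.1) s h1 (fun j hj => h2 j hj hv) v.2).1
  · intro h0
    rw [hfa.self_of_nhds] at h0
    have := (hDq (a y.1) s hs hsj y.2).2 h0
    rwa [← deriv_snd (fun v : (Fin n → ℝ) × ℝ => q s (a v.1, v.2)) y hQan.differentiableAt]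

/-- Local normal form of the codimension function `σ` at `x`, adapted to the family `f`. -/
def Good {E : Type} [NormedAddCommGroup E] [NormedSpace ℝ E] {ι : Type} (f : ι → E → ℝ)
    (σ : E → ℕ) (x : E) : Prop :=
  (∀ᶠ y in 𝓝 x, σ y ≤ σ x) ∧
  (∃ k : ℕ, σ x = k ∧ ∃ (h : E → (Fin k → ℝ)) (h' : E →L[ℝ] (Fin k → ℝ)), AnalyticAt ℝ h x ∧
    HasFDerivAt h h' x ∧ Function.Surjective h' ∧ ∀ᶠ y in 𝓝 x, (σ y = σ x ↔ h y = 0)) ∧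
  ∀ i, f i x = 0 → ∀ᶠ y in 𝓝 x, σ y = σ x → f i y = 0

theorem step (n : ℕ)
    (IH : ∀ (κ : Type) [Finite κ] (g : κ → (Fin n → ℝ) → ℝ), (∀ i, AnalyticAt ℝ (g i) 0) →
      ∃ σ, ∀ᶠ x in 𝓝 0, Good g σ x)
    (ι : Type) [Finite ι] (f : ι → (Fin n → ℝ) × ℝ → ℝ) (F : (Fin n → ℝ) × ℝ → ℝ)
    (hf : ∀ i, AnalyticAt ℝ (f i) 0) (hF : AnalyticAt ℝ F 0) (hfF : ∀ i y, f i y = 0 → F y = 0)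
    (hreg : ¬ ∀ᶠ t in 𝓝 (0 : ℝ), F (0, t) = 0) :
    ∃ σ, ∀ᶠ y in 𝓝 0, Good f σ y := by
  classical
  obtain ⟨mF, DF, hDF, hFfib⟩ := fiber n F hF hreg
  have hregi : ∀ i, ¬ ∀ᶠ t in 𝓝 (0 : ℝ), f i (0, t) = 0 := by
    intro i h
    apply hreg
    filter_upwards [h] with t ht using hfF i _ ht
  choose m D hD hfib using fun i => fiber n (f i) (hf i) (hregi i)
  let κ := Fin (mF + 1) ⊕ (Σ i : ι, Fin (m i + 1))
  let g : κ → (Fin n → ℝ) → ℝ := Sum.elim DF (fun p => D p.1 p.2)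
  obtain ⟨σ, hσ⟩ := IH κ g (by
    rintro (s | ⟨i, s⟩)
    · exact hDF s
    · exact hD i s)
  have hF1 := hFfib σ (by
    filter_upwards [hσ] with x hx s hs
    exact hx.2.2 (Sum.inl s) hs)
  have hf1 := fun i => hfib i σ (by
    filter_upwards [hσ] with x hx s hs
    exact hx.2.2 (Sum.inr ⟨i, s⟩) hs)
  have hf1' := eventually_all.2 hf1
  refine ⟨fun y => if F y = 0 then σ y.1 + 1 else σ y.1, ?_⟩
  have hfst : Tendsto Prod.fst (𝓝 (0 : (Fin n → ℝ) × ℝ)) (𝓝 0) := continuous_fst.tendsto _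
  filter_upwards [hfst.eventually hσ, hF1, hf1', hF.eventually_analyticAt] with y hσ hF1 hf1 hFan
  obtain ⟨hle, ⟨k, hk, h, h', hh, hh', hsurj, hiff⟩, -⟩ := hσ
  obtain ⟨Q, hQan, hQ0, hQd⟩ := hF1
  have ht := continuous_fst.tendsto y
  have hle' := ht.eventually hle
  have hiff' := ht.eventually hiff
  have hhan : AnalyticAt ℝ (fun v : (Fin n → ℝ) × ℝ => h v.1) y :=
    AnalyticAt.fun_comp (g := h) (f := Prod.fst) hh analyticAt_fst
  have hhd : HasFDerivAt (fun v : (Fin n → ℝ) × ℝ => h v.1)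
      (h' ∘L ContinuousLinearMap.fst ℝ (Fin n → ℝ) ℝ) y :=
    HasFDerivAt.comp (g := h) (f := Prod.fst) y hh' hasFDerivAt_fst
  by_cases hFy : F y = 0
  · have hlev : ∀ᶠ v in 𝓝 y, ((if F v = 0 then σ v.1 + 1 else σ v.1) =
        (if F y = 0 then σ y.1 + 1 else σ y.1)) ↔ (σ v.1 = σ y.1 ∧ F v = 0) := by
      filter_upwards [hle'] with v hv
      rw [if_pos hFy]
      by_cases hFv : F v = 0
      · simp [hFv]
      · simp only [hFv, if_false, and_false, iff_false]; omega
    have hQy : Q y = 0 := (hQ0.self_of_nhds rfl).2 hFy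
    refine ⟨?_, ⟨k + 1, ?_, ?_⟩, ?_⟩
    · filter_upwards [hle'] with v hv
      rw [if_pos hFy]
      split_ifs <;> omega
    · simp only [if_pos hFy, hk]
    · refine ⟨fun v => Fin.cons (Q v) (h v.1), ContinuousLinearMap.pi (Fin.cons (fderiv ℝ Q y)
        (fun i => ContinuousLinearMap.proj i ∘L (h' ∘L ContinuousLinearMap.fst ℝ (Fin n → ℝ) ℝ))),
        ?_, ?_, ?_, ?_⟩
      · rw [analyticAt_pi_iff]
        intro i
        refine Fin.cases ?_ (fun j => ?_) i
        · exact hQan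
        · exact (analyticAt_pi_iff.1 hhan) j
      · rw [hasFDerivAt_pi]
        intro i
        refine Fin.cases ?_ (fun j => ?_) i
        · exact hQan.differentiableAt.hasFDerivAt
        · exact (hasFDerivAt_pi'.1 hhd) j
      · intro w
        obtain ⟨u, hu⟩ := hsurj (fun i => w i.succ)
        have hd := hQd hFy
        refine ⟨(u, (w 0 - fderiv ℝ Q y (u, 0)) / fderiv ℝ Q y (0, 1)), ?_⟩
        ext i
        refine Fin.cases ?_ (fun j => ?_) i
        · simp only [ContinuousLinearMap.coe_pi', Fin.cons_zero]
          have : ∀ c : ℝ, fderiv ℝ Q y (u, c) = fderiv ℝ Q y (u, 0) + c * fderiv ℝ Q y (0, 1) := by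
            intro c
            have : (u, c) = (u, (0 : ℝ)) + c • ((0 : Fin n → ℝ), (1 : ℝ)) := by simp
            rw [this, map_add, map_smul, smul_eq_mul]
          rw [this, div_mul_cancel₀ _ hd]; ring
        · simpa using congrFun hu j
      · filter_upwards [hlev, hiff', hQ0] with v h1 h2 h3
        rw [h1]
        have h4 : (Fin.cons (Q v) (h v.1) : Fin (k + 1) → ℝ) = 0 ↔ Q v = 0 ∧ h v.1 = 0 := by
          constructor
          · intro h0
            exact ⟨congrFun h0 0, funext (fun j => congrFun h0 j.succ)⟩
          · rintro ⟨h0, h0'⟩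
            ext i
            refine Fin.cases ?_ (fun j => ?_) i
            · exact h0
            · exact congrFun h0' j
        rw [h4, ← h2]
        constructor
        · rintro ⟨ha, hb⟩; exact ⟨(h3 ha).2 hb, ha⟩
        · rintro ⟨ha, hb⟩; exact ⟨hb, (h3 hb).1 ha⟩
    · intro i hi
      obtain ⟨Qi, hQian, hQi0, hQid⟩ := hf1 i
      have hQiy : Qi y = 0 := (hQi0.self_of_nhds rfl).2 hi
      have := implicit_compare Q Qi y hQan hQian hQy hQiy (hQd hFy) (hQid hi)
        (fun x => σ x = σ y.1) (by
          filter_upwards [hQ0, hQi0] with v h1 h2 hN hv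
          exact (h1 hN).2 (hfF i v ((h2 hN).1 hv)))
      filter_upwards [this, hlev, hQ0, hQi0] with v h1 h2 h3 h4 hv
      obtain ⟨hv1, hv2⟩ := h2.1 hv
      exact (h4 hv1).1 (h1 hv1 ((h3 hv1).2 hv2))
  · have hne : ∀ᶠ v in 𝓝 y, F v ≠ 0 := hFan.continuousAt.eventually_ne hFy
    refine ⟨?_, ⟨k, ?_, ?_⟩, ?_⟩
    · filter_upwards [hle', hne] with v hv hv'
      rwa [if_neg hFy, if_neg hv']
    · simp only [if_neg hFy, hk]
    · refine ⟨fun v => h v.1, h' ∘L ContinuousLinearMap.fst ℝ (Fin n → ℝ) ℝ, hhan, hhd, ?_, ?_⟩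
      · intro w
        obtain ⟨u, hu⟩ := hsurj w
        exact ⟨(u, 0), hu⟩
      · filter_upwards [hiff', hne] with v hv hv'
        rwa [if_neg hFy, if_neg hv']
    · intro i hi
      exact absurd (hfF i y hi) hFy

end step

section claim

lemma germ_domain {E : Type} [NormedAddCommGroup E] [NormedSpace ℝ E] (f g : E → ℝ)
    (hf : AnalyticAt ℝ f 0) (hg : AnalyticAt ℝ g 0) (h : ∀ᶠ x in 𝓝 0, f x * g x = 0)
    (hf0 : ¬ ∀ᶠ x in 𝓝 0, f x = 0) : ∀ᶠ x in 𝓝 0, g x = 0 := by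
  obtain ⟨r, hr, hball⟩ := Metric.eventually_nhds_iff_ball.1
    (h.and (hf.eventually_analyticAt.and hg.eventually_analyticAt))
  have hex : ∃ p ∈ Metric.ball (0 : E) r, f p ≠ 0 := by
    by_contra hcon
    push Not at hcon
    exact hf0 (by filter_upwards [Metric.ball_mem_nhds (0 : E) hr] with x hx using hcon x hx)
  obtain ⟨p, hp, hfp⟩ := hex
  have hgp : g =ᶠ[𝓝 p] 0 := by
    filter_upwards [Metric.isOpen_ball.mem_nhds hp,
      (hball p hp).2.1.continuousAt.eventually_ne hfp] with x hx hne
    exact (mul_eq_zero.1 (hball x hx).1).resolve_left hne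
  have hgan : AnalyticOnNhd ℝ g (Metric.ball 0 r) := fun x hx => (hball x hx).2.2
  have := hgan.eqOn_zero_of_preconnected_of_eventuallyEq_zero
    (convex_ball (0 : E) r).isPreconnected hp hgp
  filter_upwards [Metric.ball_mem_nhds (0 : E) hr] with x hx using this hx

lemma germ_prod {E : Type} [NormedAddCommGroup E] [NormedSpace ℝ E] {ι : Type} (f : ι → E → ℝ)
    (s : Finset ι) (hf : ∀ i, AnalyticAt ℝ (f i) 0) (hf0 : ∀ i, ¬ ∀ᶠ x in 𝓝 0, f i x = 0) :
    AnalyticAt ℝ (fun x => ∏ i ∈ s, f i x) 0 ∧ ¬ ∀ᶠ x in 𝓝 0, ∏ i ∈ s, f i x = 0 := by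
  classical
  induction s using Finset.induction_on with
  | empty =>
    simp only [Finset.prod_empty, one_ne_zero]
    refine ⟨analyticAt_const, ?_⟩
    intro hh
    simpa using hh.self_of_nhds
  | insert i s hi ih =>
    simp only [Finset.prod_insert hi]
    refine ⟨(hf i).mul ih.1, fun h => ih.2 ?_⟩
    exact germ_domain _ _ (hf i) ih.1 h (hf0 i)

lemma exists_direction {E : Type} [NormedAddCommGroup E] [NormedSpace ℝ E] [Nontrivial E]
    (F : E → ℝ) (hF : AnalyticAt ℝ F 0) (hF0 : ¬ ∀ᶠ x in 𝓝 0, F x = 0) :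
    ∃ p : E, p ≠ 0 ∧ ¬ ∀ᶠ t in 𝓝 (0 : ℝ), F (t • p) = 0 := by
  by_cases h0 : F 0 = 0
  · obtain ⟨r, hr, hball⟩ := Metric.eventually_nhds_iff_ball.1 hF.eventually_analyticAt
    have hex : ∃ p ∈ Metric.ball (0 : E) r, F p ≠ 0 := by
      by_contra hcon
      push Not at hcon
      exact hF0 (by filter_upwards [Metric.ball_mem_nhds (0 : E) hr] with x hx using hcon x hx)
    obtain ⟨p, hp, hFp⟩ := hex
    refine ⟨p, fun h => hFp (by rw [h, h0]), fun hev => hFp ?_⟩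
    let U : Set ℝ := (fun t : ℝ => t • p) ⁻¹' Metric.ball 0 r
    have hU : Convex ℝ U := (convex_ball (0 : E) r).is_linear_preimage
      (IsLinearMap.isLinearMap_smul' p)
    have han : AnalyticOnNhd ℝ (fun t : ℝ => F (t • p)) U := by
      intro t ht
      exact AnalyticAt.fun_comp (g := F) (hball _ ht) (analyticAt_id.smul analyticAt_const)
    have := han.eqOn_zero_of_preconnected_of_eventuallyEq_zero hU.isPreconnected
      (z₀ := 0) (by simp [U, hr]) hev
    have h1 := this (show (1 : ℝ) ∈ U by simpa [U] using hp)
    simpa using h1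
  · obtain ⟨p, hp⟩ := exists_ne (0 : E)
    refine ⟨p, hp, fun hev => h0 ?_⟩
    simpa using hev.self_of_nhds

lemma Good.transfer {E E' : Type} [NormedAddCommGroup E] [NormedSpace ℝ E]
    [NormedAddCommGroup E'] [NormedSpace ℝ E'] {ι : Type} (e : E ≃L[ℝ] E') (f : ι → E' → ℝ)
    (σ : E → ℕ) (x : E') (h : Good (fun i y => f i (e y)) σ (e.symm x)) :
    Good f (fun y => σ (e.symm y)) x := by
  have ht : Tendsto e.symm (𝓝 x) (𝓝 (e.symm x)) := e.symm.continuous.tendsto x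
  obtain ⟨h1, ⟨k, hk, h, h', hh, hh', hs, hiff⟩, h3⟩ := h
  refine ⟨ht.eventually h1, ⟨k, hk, fun y => h (e.symm y), h' ∘L (e.symm : E' →L[ℝ] E), ?_, ?_, ?_,
    ht.eventually hiff⟩, ?_⟩
  · exact AnalyticAt.fun_comp (g := h) hh (e.symm.analyticAt x)
  · exact HasFDerivAt.comp (g := h) x hh' e.symm.hasFDerivAt
  · exact hs.comp e.symm.surjective
  · intro i hi
    have := ht.eventually (h3 i (by simpa using hi))
    simpa using this

theorem claim (n : ℕ) : ∀ (κ : Type) [Finite κ] (g : κ → (Fin n → ℝ) → ℝ),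
    (∀ i, AnalyticAt ℝ (g i) 0) → ∃ σ, ∀ᶠ x in 𝓝 0, Good g σ x := by
  induction n with
  | zero =>
    intro κ _ g hg
    refine ⟨fun _ => 0, Eventually.of_forall (fun x => ⟨by simp, ⟨0, rfl, fun _ => 0, 0,
      analyticAt_const, hasFDerivAt_const _ _, fun w => ⟨0, Subsingleton.elim _ _⟩, ?_⟩, ?_⟩)⟩
    · simp
    · intro i hi
      exact Eventually.of_forall (fun y _ => by rwa [Subsingleton.elim y x])
  | succ n IH =>
    intro κ _ f hf
    classical
    have := Fintype.ofFinite κ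
    let ft : κ → (Fin (n + 1) → ℝ) → ℝ := fun i =>
      if ∀ᶠ y in 𝓝 0, f i y = 0 then fun _ => 1 else f i
    have hft : ∀ i, AnalyticAt ℝ (ft i) 0 := by
      intro i
      by_cases h : ∀ᶠ y in 𝓝 0, f i y = 0
      · simp only [ft, if_pos h]; exact analyticAt_const
      · simp only [ft, if_neg h]; exact hf i
    have hft0 : ∀ i, ¬ ∀ᶠ x in 𝓝 0, ft i x = 0 := by
      intro i
      by_cases h : ∀ᶠ y in 𝓝 0, f i y = 0
      · intro hh
        simpa [ft, if_pos h] using hh.self_of_nhds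
      · simp only [ft, if_neg h]; exact h
    obtain ⟨hFan, hF0⟩ := germ_prod ft Finset.univ hft hft0
    obtain ⟨p, hp, hFp⟩ := exists_direction _ hFan hF0
    obtain ⟨e, he⟩ : ∃ e : ((Fin n → ℝ) × ℝ) ≃L[ℝ] (Fin (n + 1) → ℝ), e (0, 1) = p := by
      have e1 : ((Fin n → ℝ) × ℝ) ≃L[ℝ] (Fin (n + 1) → ℝ) :=
        ContinuousLinearEquiv.ofFinrankEq (by simp)
      obtain ⟨A, hA⟩ := SeparatingDual.exists_continuousLinearEquiv_apply_eq (R := ℝ)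
        (x := e1 (0, 1)) (y := p) (by
          intro h
          have h2 := e1.map_eq_zero_iff.1 h
          have := congrArg Prod.snd h2
          simp at this) hp
      exact ⟨e1.trans A, hA⟩
    have hcomp : ∀ G : (Fin (n + 1) → ℝ) → ℝ, AnalyticAt ℝ G 0 →
        AnalyticAt ℝ (fun y => G (e y)) 0 := by
      intro G hG
      refine AnalyticAt.fun_comp (g := G) ?_ (e.analyticAt 0)
      rwa [map_zero]
    obtain ⟨σ, hσ⟩ := step n IH κ (fun i y => ft i (e y)) (fun y => ∏ i, ft i (e y))
      (fun i => hcomp _ (hft i)) (hcomp _ hFan)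
      (fun i y h => Finset.prod_eq_zero (Finset.mem_univ i) h) (by
        intro h
        apply hFp
        filter_upwards [h] with t ht
        have : e (0, t) = t • p := by
          rw [← he, ← map_smul]; simp
        rwa [this] at ht)
    refine ⟨fun y => σ (e.symm y), ?_⟩
    have ht : Tendsto e.symm (𝓝 0) (𝓝 0) := by
      have := e.symm.continuous.tendsto 0
      rwa [map_zero] at this
    have hz : ∀ᶠ x in 𝓝 (0 : Fin (n + 1) → ℝ), ∀ i, (∀ᶠ y in 𝓝 0, f i y = 0) →
        ∀ᶠ y in 𝓝 x, f i y = 0 := by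
      rw [eventually_all]
      intro i
      by_cases h : ∀ᶠ y in 𝓝 0, f i y = 0
      · filter_upwards [h.eventually_nhds] with x hx _ using hx
      · exact Eventually.of_forall (fun x h' => absurd h' h)
    filter_upwards [ht.eventually hσ, hz] with x hx hz
    obtain ⟨h1, h2, h3⟩ := Good.transfer e ft σ x hx
    refine ⟨h1, h2, fun i hi => ?_⟩
    by_cases h : ∀ᶠ y in 𝓝 0, f i y = 0
    · filter_upwards [hz i h] with y hy _ using hy
    · have h4 := h3 i
      simp only [ft, if_neg h] at h4
      exact h4 hi

end claim

section final

lemma Good.translate {E : Type} [NormedAddCommGroup E] [NormedSpace ℝ E] {ι : Type}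
    (f : ι → E → ℝ) (σ : E → ℕ) (x₀ x : E) (h : Good (fun i y => f i (x₀ + y)) σ (x - x₀)) :
    Good f (fun z => σ (z - x₀)) x := by
  have ht : Tendsto (fun z : E => z - x₀) (𝓝 x) (𝓝 (x - x₀)) :=
    (continuous_id.sub continuous_const).tendsto x
  have hd : HasFDerivAt (fun z : E => z - x₀) (ContinuousLinearMap.id ℝ E) x :=
    (hasFDerivAt_id x).sub_const x₀
  have han : AnalyticAt ℝ (fun z : E => z - x₀) x := analyticAt_id.sub analyticAt_const
  obtain ⟨h1, ⟨k, hk, H, H', hH, hH', hs, hz⟩, h3⟩ := h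
  refine ⟨ht.eventually h1, ⟨k, hk, fun z => H (z - x₀), H', ?_, ?_, hs, ht.eventually hz⟩, ?_⟩
  · exact AnalyticAt.fun_comp (g := H) hH han
  · have := HasFDerivAt.comp x hH' hd
    simpa using this
  · intro i hi
    have h4 := ht.eventually (h3 i (by simpa using hi))
    filter_upwards [h4] with y hy hy2
    simpa using hy hy2

lemma exists_split (d d' k : ℕ) (hk : d' + k = d) (h' : (Fin d → ℝ) →L[ℝ] (Fin k → ℝ))
    (hs : Function.Surjective h') :
    ∃ π : (Fin d → ℝ) →L[ℝ] (Fin d' → ℝ), Function.Bijective (π.prod h') := by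
  have hker : Module.finrank ℝ (LinearMap.ker h'.toLinearMap) = Module.finrank ℝ (Fin d' → ℝ) := by
    have h1 := LinearMap.finrank_range_add_finrank_ker h'.toLinearMap
    have h2 : LinearMap.range h'.toLinearMap = ⊤ := LinearMap.range_eq_top.2 hs
    rw [h2, finrank_top] at h1
    simp only [Module.finrank_fin_fun] at h1 ⊢
    omega
  let e := LinearEquiv.ofFinrankEq _ _ hker
  obtain ⟨P, hP⟩ := LinearMap.exists_leftInverse_of_injective
    (LinearMap.ker h'.toLinearMap).subtype (by simp)
  let π : (Fin d → ℝ) →L[ℝ] (Fin d' → ℝ) := LinearMap.toContinuousLinearMap (e.toLinearMap ∘ₗ P)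
  refine ⟨π, ?_⟩
  have hinj : Function.Injective (π.prod h').toLinearMap := by
    rw [← LinearMap.ker_eq_bot, LinearMap.ker_eq_bot']
    intro v hv
    have hv1 : e (P v) = 0 := congrArg Prod.fst hv
    have hv2 : h' v = 0 := congrArg Prod.snd hv
    have h3 : P v = ⟨v, hv2⟩ := LinearMap.congr_fun hP ⟨v, hv2⟩
    rw [LinearEquiv.map_eq_zero_iff, h3] at hv1
    exact congrArg Subtype.val hv1
  exact ⟨hinj, (LinearMap.injective_iff_surjective_of_finrank_eq_finrank (by simp [hk])).1 hinj⟩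

lemma exists_chart (d d' k : ℕ) (hk : d' + k = d) (x : Fin d → ℝ) (h : (Fin d → ℝ) → (Fin k → ℝ))
    (h' : (Fin d → ℝ) →L[ℝ] (Fin k → ℝ)) (hh : AnalyticAt ℝ h x) (hd : HasFDerivAt h h' x)
    (hs : Function.Surjective h') (hx : h x = 0) (M : Set (Fin d → ℝ))
    (hM : ∀ᶠ y in 𝓝 x, (y ∈ M ↔ h y = 0)) :
    ∃ (U : Set (Fin d → ℝ)) (W : Set ((Fin d' → ℝ) × (Fin k → ℝ)))
      (φ : (Fin d' → ℝ) × (Fin k → ℝ) → (Fin d → ℝ)),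
      IsOpen U ∧ x ∈ U ∧ IsOpen W ∧ (0 : (Fin d' → ℝ) × (Fin k → ℝ)) ∈ W ∧
      (∀ w ∈ W, AnalyticAt ℝ φ w) ∧
      (∃ h : W ≃ₜ U, ∀ w : W, (h w : Fin d → ℝ) = φ (w : _)) ∧
      M ∩ U = {y : Fin d → ℝ | ∃ τ : Fin d' → ℝ, (τ, 0) ∈ W ∧ φ (τ, 0) = y} := by
  obtain ⟨π, hπ⟩ := exists_split d d' k hk h' hs
  let L : (Fin d → ℝ) ≃L[ℝ] ((Fin d' → ℝ) × (Fin k → ℝ)) :=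
    ContinuousLinearEquiv.ofBijective (π.prod h')
      (LinearMap.ker_eq_bot.2 hπ.1) (LinearMap.range_eq_top.2 hπ.2)
  have hL : (L : (Fin d → ℝ) →L[ℝ] ((Fin d' → ℝ) × (Fin k → ℝ))) = π.prod h' :=
    ContinuousLinearMap.ext (fun p => rfl)
  let Ψ : (Fin d → ℝ) → (Fin d' → ℝ) × (Fin k → ℝ) := fun y => (π (y - x), h y)
  have hΨan : AnalyticAt ℝ Ψ x := by
    refine AnalyticAt.prod ?_ hh
    exact AnalyticAt.fun_comp (g := π) (π.analyticAt _) (analyticAt_id.sub analyticAt_const)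
  have hΨd : HasFDerivAt Ψ (L : (Fin d → ℝ) →L[ℝ] ((Fin d' → ℝ) × (Fin k → ℝ))) x := by
    rw [hL]
    refine HasFDerivAt.prodMk ?_ hd
    have h2 : HasFDerivAt (fun z : Fin d → ℝ => z - x) (ContinuousLinearMap.id ℝ _) x :=
      (hasFDerivAt_id x).sub_const x
    have := HasFDerivAt.comp (f := fun z : Fin d → ℝ => z - x) x (π.hasFDerivAt (x := x - x)) h2
    simpa using this
  have hstrict : HasStrictFDerivAt Ψ
      (L : (Fin d → ℝ) →L[ℝ] ((Fin d' → ℝ) × (Fin k → ℝ))) x := by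
    have h1 := hΨan.hasStrictFDerivAt
    rwa [hΨd.fderiv] at h1
  let Θ := hstrict.toOpenPartialHomeomorph Ψ
  have hΘ : ∀ y, Θ y = Ψ y := fun y => rfl
  have hΘs : x ∈ Θ.source := hstrict.mem_toOpenPartialHomeomorph_source
  have hΘ0 : Θ x = 0 := by
    rw [hΘ]; simp [Ψ, hx]
  have hsymm : AnalyticAt ℝ Θ.symm 0 := by
    rw [← hΘ0]
    exact Θ.analyticAt_symm' (i := L) hΘs hΨan hΨd.fderiv
  have hsx : Θ.symm 0 = x := by rw [← hΘ0, Θ.left_inv hΘs]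
  have hcont : Tendsto Θ.symm (𝓝 0) (𝓝 x) := by
    have := hsymm.continuousAt.tendsto
    rwa [hsx] at this
  have ht0 : (0 : (Fin d' → ℝ) × (Fin k → ℝ)) ∈ Θ.target := by
    rw [← hΘ0]; exact Θ.map_source hΘs
  have htev : ∀ᶠ w in 𝓝 0, w ∈ Θ.target := Θ.open_target.mem_nhds ht0
  obtain ⟨W, hWsub, hWo, h0W⟩ := mem_nhds_iff.1
    (htev.and (hsymm.eventually_analyticAt.and (hcont.eventually hM)))
  let R := Θ.symm.restrOpen W hWo
  have hRs : R.source = W := by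
    change Θ.target ∩ W = W
    exact Set.inter_eq_right.2 (fun w hw => (hWsub hw).1)
  have hRf : ∀ w, R w = Θ.symm w := fun w => rfl
  have hU : R.target = Θ.symm '' W := by
    rw [← R.image_source_eq_target, hRs]
    rfl
  refine ⟨R.target, R.source, Θ.symm, R.open_target, ?_, R.open_source, by rw [hRs]; exact h0W,
    ?_, ⟨R.toHomeomorphSourceTarget, fun w => rfl⟩, ?_⟩
  · rw [hU]; exact ⟨0, h0W, hsx⟩
  · intro w hw
    rw [hRs] at hw
    exact (hWsub hw).2.1
  · ext y
    rw [hU, hRs]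
    constructor
    · rintro ⟨hyM, w, hw, rfl⟩
      obtain ⟨hwt, _, hwM⟩ := hWsub hw
      have h0 := hwM.1 hyM
      have h1 : Ψ (Θ.symm w) = w := Θ.right_inv hwt
      have h2 : w.2 = 0 := by rw [← h1]; exact h0
      refine ⟨w.1, ?_, ?_⟩ <;> rw [← h2]
      exact hw
    · rintro ⟨τ, hτ, rfl⟩
      obtain ⟨hwt, _, hwM⟩ := hWsub hτ
      have h1 : Ψ (Θ.symm (τ, 0)) = (τ, 0) := Θ.right_inv hwt
      exact ⟨hwM.2 (congrArg Prod.snd h1), _, hτ, rfl⟩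

end final

end Loj

/-- Łojasiewicz structure theorem, local form: the zero set of a not
identically zero real analytic function `f : ℝ^d → ℝ` locally decomposes as a union of
pieces `M₀ ∪ ⋯ ∪ M_{d−1}`, each piece `M_{d'}` admitting, near each of its points, a real
analytic local parametrisation `φ : W → U` (a homeomorphism from an open neighbourhood `W`
of `0` in `ℝ^{d'} × ℝ^{d−d'}` onto an open neighbourhood `U`) with
`M_{d'} ∩ U = {φ(τ,0) : (τ,0) ∈ W}`. -/
theorem lojasiewicz_structure_theorem (d : ℕ) (f : (Fin d → ℝ) → ℝ)
    (hf : ∀ x, AnalyticAt ℝ f x) (hne : ∃ x, f x ≠ 0) :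
    ∀ x₀ ∈ {x : Fin d → ℝ | f x = 0},
      ∃ Ω : Set (Fin d → ℝ), IsOpen Ω ∧ x₀ ∈ Ω ∧
        ∃ M : Fin d → Set (Fin d → ℝ),
          ({x : Fin d → ℝ | f x = 0} ∩ Ω = ⋃ d' : Fin d, M d') ∧
          ∀ d' : Fin d, ∀ x ∈ M d',
            ∃ (U : Set (Fin d → ℝ))
              (W : Set ((Fin (d' : ℕ) → ℝ) × (Fin (d - (d' : ℕ)) → ℝ)))
              (φ : (Fin (d' : ℕ) → ℝ) × (Fin (d - (d' : ℕ)) → ℝ) → (Fin d → ℝ)),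
              IsOpen U ∧ x ∈ U ∧ IsOpen W ∧
              (0 : (Fin (d' : ℕ) → ℝ) × (Fin (d - (d' : ℕ)) → ℝ)) ∈ W ∧
              (∀ w ∈ W, AnalyticAt ℝ φ w) ∧
              (∃ h : W ≃ₜ U, ∀ w : W, (h w : Fin d → ℝ) = φ (w : _)) ∧
              M d' ∩ U =
                {y : Fin d → ℝ | ∃ τ : Fin (d' : ℕ) → ℝ, (τ, 0) ∈ W ∧ φ (τ, 0) = y} := by
  intro x₀ _
  obtain ⟨σ₀, hσ₀⟩ := Loj.claim d Unit (fun _ y => f (x₀ + y)) (by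
    intro _
    refine AnalyticAt.fun_comp (g := f) (hf _) (analyticAt_const.add analyticAt_id))
  obtain ⟨Ω₀, hΩ₀, hΩ₀o, h0Ω₀⟩ := mem_nhds_iff.1 hσ₀
  let Ω : Set (Fin d → ℝ) := (fun x => x - x₀) ⁻¹' Ω₀
  have hΩo : IsOpen Ω := hΩ₀o.preimage (continuous_id.sub continuous_const)
  let σ : (Fin d → ℝ) → ℕ := fun x => σ₀ (x - x₀)
  have hσ : ∀ x ∈ Ω, Loj.Good (fun _ : Unit => f) σ x := fun x hx =>
    Loj.Good.translate (fun _ : Unit => f) σ₀ x₀ x (hΩ₀ hx)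
  refine ⟨Ω, hΩo, by simpa [Ω] using h0Ω₀,
    fun d' => {x | x ∈ Ω ∧ f x = 0 ∧ σ x = d - (d' : ℕ)}, ?_, ?_⟩
  · ext x
    simp only [Set.mem_inter_iff, Set.mem_setOf_eq, Set.mem_iUnion]
    constructor
    · rintro ⟨hx0, hxΩ⟩
      obtain ⟨h1, ⟨k, hk, H, H', _, _, hs, _⟩, h3⟩ := hσ x hxΩ
      have hle : k ≤ d := by
        have := LinearMap.finrank_le_finrank_of_surjective (f := H'.toLinearMap) hs
        simpa using this
      have hpos : σ x ≠ 0 := by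
        intro h0
        obtain ⟨z, hz⟩ := hne
        apply hz
        have hev : f =ᶠ[nhds x] fun _ => 0 := by
          filter_upwards [h1, h3 () hx0] with y hy1 hy2
          exact hy2 (by omega)
        have := AnalyticOnNhd.eq_of_eventuallyEq (𝕜 := ℝ) (f := f) (g := fun _ => 0)
          (fun y _ => hf y) (fun y _ => analyticAt_const) hev
        exact congrFun this z
      exact ⟨⟨d - σ x, by omega⟩, hxΩ, hx0, by simp only; omega⟩
    · rintro ⟨d', h1, h2, _⟩
      exact ⟨h2, h1⟩
  · rintro d' x ⟨hxΩ, hx0, hxσ⟩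
    obtain ⟨_, ⟨k, hk, H, H', hH, hH', hs, hz⟩, h3⟩ := hσ x hxΩ
    obtain rfl : k = d - (d' : ℕ) := by omega
    refine Loj.exists_chart d d' (d - (d' : ℕ)) (by omega) x H H' hH hH' hs
      (hz.self_of_nhds.1 rfl) _ ?_
    filter_upwards [hz, h3 () hx0, hΩo.mem_nhds hxΩ] with y hy1 hy2 hy3
    rw [← hy1]
    constructor
    · rintro ⟨_, _, h⟩
      rw [h, hxσ]
    · intro h
      exact ⟨hy3, hy2 h, by rw [h, hxσ]⟩
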